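/- Let n ≥ 3 be an integer. If G is a connected simple graph on n vertices with dissociation number n−1 that attains the minimum spectral radius among all connected simple graphs on n vertices with dissociation number n−1, then G is isomorphic to S(0, (n−1)/2) when n is odd, and to S(1, (n−2)/2) when n is even. -/

import Mathlib

/-- `S` is a dissociation set of `G`: the subgraph induced by `S` has maximum degree ≤ 1. -/
def IsDissocSet {V : Type} (G : SimpleGraph V) (S : Set V) : Prop :=
  ∀ v ∈ S, ({u ∈ S | G.Adj v u}).ncard ≤ 1

/-- The dissociation number of `G`: the maximum cardinality of a dissociation set. -/
noncomputable def dissNum {V : Type} [Fintype V] (G : SimpleGraph V) : ℕ :=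
  sSup {k | ∃ S : Set V, IsDissocSet G S ∧ S.ncard = k}

open scoped Classical in
/-- The (real) adjacency matrix of a simple graph. -/
noncomputable def adjMat {V : Type} [Fintype V] (G : SimpleGraph V) : Matrix V V ℝ :=
  Matrix.of fun i j => if G.Adj i j then 1 else 0

/-- The spectral radius of a simple graph: the largest eigenvalue of its adjacency matrix. -/
noncomputable def specRad {V : Type} [Fintype V] (G : SimpleGraph V) : ℝ :=
  sSup {t : ℝ | ∃ v : V → ℝ, v ≠ 0 ∧ (adjMat G).mulVec v = t • v}

/-- `Sgraph r t` is the tree `S(r,t)`: a center vertex (`none`) with `r` pendant leaves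
and `t` pendant paths of length 2 attached to it. -/
def Sgraph (r t : ℕ) : SimpleGraph (Option (Fin r ⊕ Fin t × Fin 2)) :=
  SimpleGraph.fromRel (fun a b =>
    (a = none ∧ ∃ i : Fin r, b = some (Sum.inl i)) ∨
    (a = none ∧ ∃ j : Fin t, b = some (Sum.inr (j, 0))) ∨
    (∃ j : Fin t, a = some (Sum.inr (j, 0)) ∧ b = some (Sum.inr (j, 1))))


section helpers
open Finset
open scoped Classical

/-- Neighbour sum. -/
lemma adjMat_mulVec {V : Type} [Fintype V] (G : SimpleGraph V) (v : V → ℝ) (i : V) :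
    (adjMat G).mulVec v i = ∑ j, if G.Adj i j then v j else 0 := by
  simp [Matrix.mulVec, dotProduct, adjMat]

lemma eig_le {V : Type} [Fintype V] (G : SimpleGraph V) (w : V → ℝ) (ρ : ℝ)
    (hw : ∀ i, 0 < w i) (h : ∀ i, (∑ j, if G.Adj i j then w j else 0) ≤ ρ * w i)
    (t : ℝ) (v : V → ℝ) (hv : v ≠ 0) (ht : (adjMat G).mulVec v = t • v) : t ≤ ρ := by
  obtain ⟨k, hk⟩ : ∃ k, v k ≠ 0 := by
    by_contra hcon
    push Not at hcon
    exact hv (funext hcon)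
  have : Nonempty V := ⟨k⟩
  obtain ⟨i, hi⟩ := Finite.exists_max (fun i => |v i| / w i)
  set m := |v i| / w i with hm
  have hmpos : 0 < m := lt_of_lt_of_le (div_pos (abs_pos.mpr hk) (hw k)) (hi k)
  have hvi : |v i| = m * w i := by
    rw [hm]; field_simp [(hw i).ne']
  have hle : ∀ j, |v j| ≤ m * w j := fun j => by
    have := hi j
    rwa [div_le_iff₀ (hw j)] at this
  have h1 := congrFun ht i
  rw [adjMat_mulVec] at h1
  simp only [Pi.smul_apply, smul_eq_mul] at h1
  have h2 : |t| * |v i| ≤ m * (ρ * w i) := by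
    rw [← abs_mul, ← h1]
    calc |∑ j, if G.Adj i j then v j else 0| ≤ ∑ j, |if G.Adj i j then v j else 0| :=
          Finset.abs_sum_le_sum_abs _ _
      _ ≤ ∑ j, m * (if G.Adj i j then w j else 0) := by
          apply Finset.sum_le_sum
          intro j _
          split_ifs
          · exact hle j
          · simp
      _ = m * ∑ j, (if G.Adj i j then w j else 0) := by rw [Finset.mul_sum]
      _ ≤ _ := mul_le_mul_of_nonneg_left (h i) hmpos.le
  rw [hvi] at h2
  have h3 : |t| * (m * w i) ≤ ρ * (m * w i) := by linarith
  have := le_of_mul_le_mul_right h3 (mul_pos hmpos (hw i))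
  exact (le_abs_self t).trans this

lemma adjMat_herm {V : Type} [Fintype V] (G : SimpleGraph V) : (adjMat G).IsHermitian := by
  ext i j
  simp [adjMat, G.adj_comm]

lemma specRad_bdd {V : Type} [Fintype V] (G : SimpleGraph V) :
    BddAbove {t : ℝ | ∃ v : V → ℝ, v ≠ 0 ∧ (adjMat G).mulVec v = t • v} := by
  refine ⟨Fintype.card V, ?_⟩
  rintro t ⟨v, hv, ht⟩
  refine eig_le G (fun _ => 1) _ (fun _ => one_pos) ?_ t v hv ht
  intro i
  calc (∑ j, if G.Adj i j then (1:ℝ) else 0) ≤ ∑ j : V, (1:ℝ) := by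
        apply Finset.sum_le_sum; intro j _; split_ifs <;> norm_num
    _ = _ := by simp

/-- upper bound through a positive sub-eigenvector -/
lemma specRad_le {V : Type} [Fintype V] (G : SimpleGraph V) (w : V → ℝ) (ρ : ℝ) (hρ : 0 ≤ ρ)
    (hw : ∀ i, 0 < w i) (h : ∀ i, (∑ j, if G.Adj i j then w j else 0) ≤ ρ * w i) :
    specRad G ≤ ρ := by
  apply Real.sSup_le
  · rintro t ⟨v, hv, ht⟩
    exact eig_le G w ρ hw h t v hv ht
  · exact hρ

/-- strict lower bound through a super-eigenvector -/
lemma lt_specRad {V : Type} [Fintype V] (G : SimpleGraph V) (w : V → ℝ) (ρ : ℝ)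
    (hw : ∀ i, 0 < w i) (h : ∀ i, ρ * w i ≤ (∑ j, if G.Adj i j then w j else 0))
    (c : V) (hc : ρ * w c < (∑ j, if G.Adj c j then w j else 0)) :
    ρ < specRad G := by
  by_contra hcon
  push Not at hcon
  have hB : (ρ • (1 : Matrix V V ℝ) - adjMat G).IsHermitian := by
    apply Matrix.IsHermitian.sub
    · ext i j; simp [Matrix.one_apply, eq_comm]
    · exact adjMat_herm G
  have hps : (ρ • (1 : Matrix V V ℝ) - adjMat G).PosSemidef := by
    rw [hB.posSemidef_iff_eigenvalues_nonneg]
    intro i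
    have hmv := hB.mulVec_eigenvectorBasis i
    set x : V → ℝ := ⇑(hB.eigenvectorBasis i) with hx
    have hx0 : x ≠ 0 := by
      intro h0
      have := hB.eigenvectorBasis.orthonormal.ne_zero i
      apply this
      ext k
      exact congrFun h0 k
    have h2 : (adjMat G).mulVec x = (ρ - hB.eigenvalues i) • x := by
      rw [Matrix.sub_mulVec, Matrix.smul_mulVec, Matrix.one_mulVec] at hmv
      rw [sub_smul, ← hmv]; abel
    have h3 : ρ - hB.eigenvalues i ≤ specRad G := le_csSup (specRad_bdd G) ⟨x, hx0, h2⟩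
    show 0 ≤ hB.eigenvalues i
    linarith
  have h4 := hps.dotProduct_mulVec_nonneg w
  have h5 : ∀ i, ((ρ • (1 : Matrix V V ℝ) - adjMat G).mulVec w) i
      = ρ * w i - ∑ j, if G.Adj i j then w j else 0 := by
    intro i
    rw [Matrix.sub_mulVec, Matrix.smul_mulVec, Matrix.one_mulVec, Pi.sub_apply, adjMat_mulVec]
    simp
  have h6 : ∑ i, w i * (ρ * w i - ∑ j, if G.Adj i j then w j else 0) < 0 := by
    refine lt_of_lt_of_eq (b := ∑ i : V, (0:ℝ)) ?_ (by simp)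
    apply Finset.sum_lt_sum
    · intro i _
      exact mul_nonpos_of_nonneg_of_nonpos (hw i).le (by linarith [h i])
    · exact ⟨c, Finset.mem_univ _, mul_neg_of_pos_of_neg (hw c) (by linarith)⟩
  simp only [dotProduct, h5, Pi.star_apply, star_trivial] at h4
  linarith

/-- every vertex other than `c` has at most one neighbour other than `c` -/
def Cond {V : Type} (G : SimpleGraph V) (c : V) : Prop :=
  ∀ v u u', v ≠ c → u ≠ c → u' ≠ c → G.Adj v u → G.Adj v u' → u = u'

lemma cond_of_diss {V : Type} [Fintype V] (G : SimpleGraph V) (hV : 1 ≤ Fintype.card V)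
    (h : dissNum G = Fintype.card V - 1) : ∃ c, Cond G c := by
  have hmem : dissNum G ∈ {k | ∃ S : Set V, IsDissocSet G S ∧ S.ncard = k} := by
    apply Nat.sSup_mem
    · exact ⟨0, ∅, by intro v hv; simp at hv, by simp⟩
    · refine ⟨Fintype.card V, ?_⟩
      rintro k ⟨S, -, rfl⟩
      rw [← Nat.card_eq_fintype_card]; exact Set.ncard_le_card S
  obtain ⟨S, hS, hk⟩ := hmem
  have hc : Sᶜ.ncard = 1 := by
    have := Set.ncard_add_ncard_compl S
    rw [Nat.card_eq_fintype_card] at this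
    omega
  obtain ⟨c, hc⟩ := Set.ncard_eq_one.mp hc
  have hin : ∀ v, v ≠ c → v ∈ S := by
    intro v hv
    by_contra hvS
    have : v ∈ Sᶜ := hvS
    rw [hc] at this
    exact hv this
  refine ⟨c, fun v u u' hv hu hu' ha ha' => ?_⟩
  exact (Set.ncard_le_one (Set.toFinite _)).mp (hS v (hin v hv)) u ⟨hin u hu, ha⟩ u' ⟨hin u' hu', ha'⟩

lemma diss_of_cond {V : Type} [Fintype V] (G : SimpleGraph V) (c : V) (h : Cond G c)
    (x a b : V) (hab : a ≠ b) (ha : G.Adj x a) (hb : G.Adj x b) :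
    dissNum G = Fintype.card V - 1 := by
  apply le_antisymm
  · apply csSup_le
    · exact ⟨0, ∅, by intro v hv; simp at hv, by simp⟩
    · rintro k ⟨S, hS, rfl⟩
      by_contra hcon
      have h1 : S.ncard ≤ Nat.card V := Set.ncard_le_card S
      rw [Nat.card_eq_fintype_card] at h1
      have h2 := Set.ncard_add_ncard_compl S
      rw [Nat.card_eq_fintype_card] at h2
      have h3 : Sᶜ.ncard = 0 := by omega
      rw [Set.ncard_eq_zero (Set.toFinite _)] at h3
      have hU : S = Set.univ := by simpa using h3
      subst hU
      exact hab ((Set.ncard_le_one (Set.toFinite _)).mp (hS x trivial) a ⟨trivial, ha⟩ b ⟨trivial, hb⟩)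
  · apply le_csSup
    · refine ⟨Fintype.card V, ?_⟩
      rintro k ⟨S, -, rfl⟩
      rw [← Nat.card_eq_fintype_card]; exact Set.ncard_le_card S
    · refine ⟨{c}ᶜ, ?_, ?_⟩
      · intro v hv
        rw [Set.ncard_le_one (Set.toFinite _)]
        rintro u ⟨hu, hvu⟩ u' ⟨hu', hvu'⟩
        exact h v u u' hv hu hu' hvu hvu'
      · have := Set.ncard_add_ncard_compl ({c} : Set V)
        rw [Nat.card_eq_fintype_card, Set.ncard_singleton] at this
        omega

/-- `p` sends each non-central vertex to its non-central neighbour (itself if none). -/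
def IsPartner {V : Type} (G : SimpleGraph V) (c : V) (p : V → V) : Prop :=
  (∀ v, v ≠ c → p v ≠ c) ∧ (∀ v, v ≠ c → p (p v) = v) ∧
      (∀ v u, v ≠ c → u ≠ c → (G.Adj v u ↔ u = p v ∧ u ≠ v)) ∧
      (∀ v, v ≠ c → G.Adj c v ∨ G.Adj c (p v))

lemma exists_partner {V : Type} (G : SimpleGraph V) (c : V) (h : Cond G c) (hconn : G.Connected) :
    ∃ p : V → V, IsPartner G c p := by
  let p : V → V := fun v => if hv : ∃ u, u ≠ c ∧ G.Adj v u then hv.choose else v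
  have hp1 : ∀ v u, v ≠ c → u ≠ c → G.Adj v u → p v = u := by
    intro v u hv hu ha
    have hex : ∃ u, u ≠ c ∧ G.Adj v u := ⟨u, hu, ha⟩
    have : p v = hex.choose := dif_pos hex
    rw [this]
    exact h v _ _ hv hex.choose_spec.1 hu hex.choose_spec.2 ha
  have hp2 : ∀ v, p v = v ∨ (p v ≠ c ∧ G.Adj v (p v)) := by
    intro v
    by_cases hex : ∃ u, u ≠ c ∧ G.Adj v u
    · right
      have : p v = hex.choose := dif_pos hex
      rw [this]; exact hex.choose_spec
    · left; exact dif_neg hex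
  have hpc : ∀ v, v ≠ c → p v ≠ c := by
    intro v hv
    rcases hp2 v with h1 | h1
    · rwa [h1]
    · exact h1.1
  have hpp : ∀ v, v ≠ c → p (p v) = v := by
    intro v hv
    rcases hp2 v with h1 | h1
    · rw [h1, h1]
    · exact hp1 _ _ h1.1 hv h1.2.symm
  have hadj : ∀ v u, v ≠ c → u ≠ c → (G.Adj v u ↔ u = p v ∧ u ≠ v) := by
    intro v u hv hu
    constructor
    · intro ha; exact ⟨(hp1 v u hv hu ha).symm, ha.ne'⟩
    · rintro ⟨rfl, hne⟩
      rcases hp2 v with h1 | h1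
      · exact absurd h1 hne
      · exact h1.2
  refine ⟨p, hpc, hpp, hadj, ?_⟩
  by_contra hcon
  push Not at hcon
  obtain ⟨v, hv, hv1, hv2⟩ := hcon
  have key : ∀ x y, G.Walk x y → (x ≠ c ∧ ¬ G.Adj c x ∧ ¬ G.Adj c (p x)) →
      (y ≠ c ∧ ¬ G.Adj c y ∧ ¬ G.Adj c (p y)) := by
    intro x y W
    induction W with
    | nil => exact id
    | @cons a b d hab W ih =>
      rintro ⟨h1, h2, h3⟩
      apply ih
      have hbc : b ≠ c := by rintro rfl; exact h2 hab.symm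
      have := ((hadj a b h1 hbc).mp hab).1
      subst this
      exact ⟨hbc, h3, by rwa [hpp a h1]⟩
  obtain ⟨W⟩ := hconn.preconnected v c
  exact (key v c W ⟨hv, hv1, hv2⟩).1 rfl

noncomputable def LL {V : Type} [Fintype V] (c : V) (p : V → V) : Finset V :=
  univ.filter fun v => v ≠ c ∧ p v = v
noncomputable def YY {V : Type} [Fintype V] (G : SimpleGraph V) (c : V) (p : V → V) : Finset V :=
  univ.filter fun v => v ≠ c ∧ p v ≠ v ∧ G.Adj c v ∧ ¬ G.Adj c (p v)
noncomputable def ZZ {V : Type} [Fintype V] (G : SimpleGraph V) (c : V) (p : V → V) : Finset V :=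
  univ.filter fun v => v ≠ c ∧ p v ≠ v ∧ ¬ G.Adj c v
noncomputable def TT {V : Type} [Fintype V] (G : SimpleGraph V) (c : V) (p : V → V) : Finset V :=
  univ.filter fun v => v ≠ c ∧ p v ≠ v ∧ G.Adj c v ∧ G.Adj c (p v)

lemma mem_LL {V : Type} [Fintype V] {c : V} {p : V → V} {v : V} :
    v ∈ LL c p ↔ v ≠ c ∧ p v = v := by
  simp only [LL, mem_filter, mem_univ, true_and]

lemma mem_TT {V : Type} [Fintype V] {G : SimpleGraph V} {c : V} {p : V → V} {v : V} :
    v ∈ TT G c p ↔ v ≠ c ∧ p v ≠ v ∧ G.Adj c v ∧ G.Adj c (p v) := by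
  simp only [TT, mem_filter, mem_univ, true_and]

lemma card_YZ {V : Type} [Fintype V] {G : SimpleGraph V} {c : V} {p : V → V}
    (hp : IsPartner G c p) : #(YY G c p) = #(ZZ G c p) := by
  obtain ⟨h1, h2, h3, h4⟩ := hp
  apply Finset.card_nbij' p p
  · intro v hv
    simp only [YY, ZZ, coe_filter, mem_univ, true_and, Set.mem_ofPred_eq] at hv ⊢
    obtain ⟨a, b, d, e⟩ := hv
    exact ⟨h1 v a, by rw [h2 v a]; exact b.symm, e⟩
  · intro v hv
    simp only [YY, ZZ, coe_filter, mem_univ, true_and, Set.mem_ofPred_eq] at hv ⊢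
    obtain ⟨a, b, d⟩ := hv
    exact ⟨h1 v a, by rw [h2 v a]; exact b.symm, (h4 v a).resolve_left d, by rwa [h2 v a]⟩
  · intro v hv
    simp only [YY, coe_filter, mem_univ, true_and, Set.mem_ofPred_eq] at hv
    exact h2 v hv.1
  · intro v hv
    simp only [ZZ, coe_filter, mem_univ, true_and, Set.mem_ofPred_eq] at hv
    exact h2 v hv.1

lemma card_total {V : Type} [Fintype V] {G : SimpleGraph V} {c : V} {p : V → V}
    (hp : IsPartner G c p) :
    Fintype.card V = 1 + #(LL c p) + 2 * #(YY G c p) + #(TT G c p) := by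
  have h : ∀ v : V, (1:ℕ) = (if v = c then 1 else 0) + (if v ≠ c ∧ p v = v then 1 else 0)
      + (if v ≠ c ∧ p v ≠ v ∧ G.Adj c v ∧ ¬ G.Adj c (p v) then 1 else 0)
      + (if v ≠ c ∧ p v ≠ v ∧ ¬ G.Adj c v then 1 else 0)
      + (if v ≠ c ∧ p v ≠ v ∧ G.Adj c v ∧ G.Adj c (p v) then 1 else 0) := by
    intro v
    by_cases e1 : v = c <;> by_cases e2 : p v = v <;> by_cases e3 : G.Adj c v <;>
      by_cases e4 : G.Adj c (p v) <;> simp only [e1, e2, e3, e4] <;> simp_all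
  have h2 : Fintype.card V = ∑ v : V, 1 := by simp
  rw [h2, Finset.sum_congr rfl (fun v _ => h v)]
  simp only [Finset.sum_add_distrib, Finset.sum_boole]
  have := card_YZ hp
  simp only [LL, YY, ZZ, TT] at this ⊢
  have hc1 : #(univ.filter fun v : V => v = c) = 1 := by
    rw [Finset.card_eq_one]; exact ⟨c, by ext; simp⟩
  rw [← this, hc1]
  simp only [Nat.cast_id]
  ring

/-- The test vector. -/
noncomputable def ww {V : Type} (G : SimpleGraph V) (c : V) (p : V → V) (ρ : ℝ) (v : V) : ℝ :=
  if v = c then 1 else if p v = v then 1 / ρ else if ¬ G.Adj c v then 1 / (ρ ^ 2 - 1)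
  else if G.Adj c (p v) then 1 / (ρ - 1) else ρ / (ρ ^ 2 - 1)

lemma ww_pos {V : Type} (G : SimpleGraph V) (c : V) (p : V → V) (ρ : ℝ) (hρ : 1 < ρ) (v : V) :
    0 < ww G c p ρ v := by
  have h1 : 0 < ρ ^ 2 - 1 := by nlinarith
  have h2 : 0 < ρ - 1 := by linarith
  have h3 : 0 < ρ := by linarith
  unfold ww
  split_ifs <;> positivity

lemma sum_off {V : Type} [Fintype V] {G : SimpleGraph V} {c : V} {p : V → V}
    (hp : IsPartner G c p) (ρ : ℝ) (hρ : 1 < ρ) (v : V) (hv : v ≠ c) :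
    (∑ u, if G.Adj v u then ww G c p ρ u else 0) = ρ * ww G c p ρ v := by
  obtain ⟨h1, h2, h3, h4⟩ := hp
  have e1 : ρ ^ 2 - 1 ≠ 0 := by nlinarith
  have e2 : ρ - 1 ≠ 0 := by linarith
  have e3 : ρ ≠ 0 := by linarith
  have hterm : ∀ u, (if G.Adj v u then ww G c p ρ u else 0) =
      (if u = c then (if G.Adj c v then 1 else 0) else 0) +
      (if u = p v then (if p v = v then 0 else ww G c p ρ (p v)) else 0) := by
    intro u
    by_cases hu : u = c
    · subst hu
      have : u ≠ p v := fun h => h1 v hv h.symm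
      simp [this, ww, G.adj_comm v u]
    · rw [if_neg hu, zero_add]
      by_cases hup : u = p v
      · subst hup
        by_cases hpv : p v = v
        · simp [hpv]
        · have := (h3 v (p v) hv hu).mpr ⟨rfl, hpv⟩
          simp [this, hpv]
      · have : ¬ G.Adj v u := fun h => hup ((h3 v u hv hu).mp h).1
        simp [this, hup]
  rw [Finset.sum_congr rfl (fun u _ => hterm u), Finset.sum_add_distrib]
  simp only [Finset.sum_ite_eq', mem_univ, if_true]
  have h5 := h1 v hv
  have h6 := h2 v hv
  have h7 := h4 v hv
  by_cases hpv : p v = v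
  · have : G.Adj c v := by rw [hpv] at h7; simpa using h7
    simp [ww, hpv, hv, this, e3]
  · have hpv' : v ≠ p v := fun h => hpv h.symm
    by_cases e3 : G.Adj c v <;> by_cases e4 : G.Adj c (p v)
    · simp [ww, hpv, hpv', hv, h5, h6, e3, e4]; field_simp; ring
    · simp [ww, hpv, hpv', hv, h5, h6, e3, e4]; field_simp; ring
    · simp [ww, hpv, hpv', hv, h5, h6, e3, e4]; field_simp
    · exact absurd h7 (by tauto)

lemma sum_center {V : Type} [Fintype V] {G : SimpleGraph V} {c : V} {p : V → V}
    (hp : IsPartner G c p) (ρ : ℝ) :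
    (∑ u, if G.Adj c u then ww G c p ρ u else 0) =
      #(LL c p) * (1 / ρ) + #(YY G c p) * (ρ / (ρ ^ 2 - 1)) + #(TT G c p) * (1 / (ρ - 1)) := by
  have h : ∀ v, (if G.Adj c v then ww G c p ρ v else 0) =
      (if v ≠ c ∧ p v = v then (1 / ρ) else 0)
      + (if v ≠ c ∧ p v ≠ v ∧ G.Adj c v ∧ ¬ G.Adj c (p v) then (ρ / (ρ ^ 2 - 1)) else 0)
      + (if v ≠ c ∧ p v ≠ v ∧ G.Adj c v ∧ G.Adj c (p v) then (1 / (ρ - 1)) else 0) := by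
    intro v
    by_cases e1 : v = c
    · subst e1; simp
    · have h7 := hp.2.2.2 v e1
      by_cases e2 : p v = v
      · have : G.Adj c v := by rw [e2] at h7; simpa using h7
        simp [ww, e1, e2, this]
      · by_cases e3 : G.Adj c v <;> by_cases e4 : G.Adj c (p v) <;> simp [ww, e1, e2, e3, e4]
  rw [Finset.sum_congr rfl (fun v _ => h v)]
  simp only [Finset.sum_add_distrib, ← Finset.sum_filter, Finset.sum_const, nsmul_eq_mul]
  rfl

/-- existence of the target spectral radius -/
lemma exists_rho (r t : ℕ) (hr : r ≤ 1) (ht : 1 ≤ t) :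
    ∃ ρ : ℝ, 1 < ρ ∧ 2 ≤ ρ ^ 2 ∧ (ρ ^ 2 - r) * (ρ ^ 2 - 1) = t * ρ ^ 2 := by
  have ht' : (1:ℝ) ≤ t := by exact_mod_cast ht
  obtain ⟨l, hl2, hl⟩ : ∃ l : ℝ, 2 ≤ l ∧ (l - r) * (l - 1) = t * l := by
    interval_cases r
    · exact ⟨t + 1, by linarith, by push_cast; ring⟩
    · have hnn : 0 ≤ ((2:ℝ) + t) ^ 2 - 4 := by nlinarith
      have hs := Real.sq_sqrt hnn
      have hs2 : 2 ≤ Real.sqrt (((2:ℝ) + t) ^ 2 - 4) := by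
        apply Real.le_sqrt_of_sq_le; nlinarith
      set s := Real.sqrt (((2:ℝ) + t) ^ 2 - 4)
      exact ⟨((2 + t) + s) / 2, by linarith, by push_cast; nlinarith⟩
  have hsq : Real.sqrt l ^ 2 = l := Real.sq_sqrt (by linarith)
  refine ⟨Real.sqrt l, ?_, by rw [hsq]; exact hl2, by rw [hsq]; exact hl⟩
  apply Real.lt_sqrt_of_sq_lt; linarith

/-- the key comparison -/
lemma key {V : Type} [Fintype V] {G : SimpleGraph V} {c : V} {p : V → V}
    (hp : IsPartner G c p) (r t : ℕ) (hr : r ≤ 1) (ht : 1 ≤ t) (ρ : ℝ) (h1 : 1 < ρ)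
    (h2 : 2 ≤ ρ ^ 2) (h3 : (ρ ^ 2 - r) * (ρ ^ 2 - 1) = t * ρ ^ 2)
    (hcard : Fintype.card V = 1 + r + 2 * t) (hle : specRad G ≤ ρ) :
    #(TT G c p) = 0 ∧ (#(LL c p) = r ∨ (r = 0 ∧ t = 1)) := by
  have hct := card_total hp
  by_contra hcon
  set l := #(LL c p)
  set y := #(YY G c p)
  set s := #(TT G c p)
  have hsum := sum_center hp ρ
  have e1 : 0 < ρ ^ 2 - 1 := by nlinarith
  have e2 : 0 < ρ - 1 := by linarith
  have e3 : 0 < ρ := by linarith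
  have hge : r ≤ l + s := by omega
  have hge' : (r:ℝ) ≤ l + s := by exact_mod_cast hge
  have hc : (l:ℝ) + 2 * y + s = r + 2 * t := by
    have : l + 2 * y + s = r + 2 * t := by omega
    exact_mod_cast this
  have hs0 : (0:ℝ) ≤ s := Nat.cast_nonneg s
  -- difference
  have hid : (l:ℝ) * (1 / ρ) + y * (ρ / (ρ ^ 2 - 1)) + s * (1 / (ρ - 1)) - ρ =
      ((l:ℝ) + s - r) * ((ρ ^ 2 - 2) / (2 * ρ * (ρ ^ 2 - 1))) + s * (1 / (ρ * (ρ - 1))) := by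
    have hy : (y:ℝ) = (r + 2 * t - l - s) / 2 := by linarith
    have ht2 : (t:ℝ) = (ρ ^ 2 - r) * (ρ ^ 2 - 1) / ρ ^ 2 := by
      field_simp; linarith
    rw [hy, ht2]
    have e4 : ρ + 1 ≠ 0 := by linarith
    have e5 : ρ - 1 ≠ 0 := e2.ne'
    have : ρ ^ 2 - 1 = (ρ - 1) * (ρ + 1) := by ring
    rw [this]
    field_simp
    ring
  have hpos : 0 < ((l:ℝ) + s - r) * ((ρ ^ 2 - 2) / (2 * ρ * (ρ ^ 2 - 1)))
      + s * (1 / (ρ * (ρ - 1))) := by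
    have hq : 0 ≤ (ρ ^ 2 - 2) / (2 * ρ * (ρ ^ 2 - 1)) := div_nonneg (by linarith) (by positivity)
    have hA := mul_nonneg (sub_nonneg.mpr hge') hq
    have hw : 0 < 1 / (ρ * (ρ - 1)) := by positivity
    rcases Nat.eq_zero_or_pos s with hs | hs
    · have hl : l ≠ r ∧ ¬ (r = 0 ∧ t = 1) := by tauto
      have hlt : (r:ℝ) < l + s := by
        have : r < l + s := by omega
        exact_mod_cast this
      have h2' : 2 < ρ ^ 2 := by
        apply lt_of_le_of_ne h2
        intro heq
        rw [← heq] at h3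
        have h4 : (2:ℝ) = 2 * t + r := by linarith
        have h5 : 2 = 2 * t + r := by exact_mod_cast h4
        exact hl.2 (by omega)
      have hq' : 0 < (ρ ^ 2 - 2) / (2 * ρ * (ρ ^ 2 - 1)) := div_pos (by linarith) (by positivity)
      have := mul_pos (sub_pos.mpr hlt) hq'
      have := mul_nonneg hs0 hw.le
      linarith
    · have : (0:ℝ) < s := by exact_mod_cast hs
      have := mul_pos this hw
      linarith
  have hwc : ww G c p ρ c = 1 := by simp [ww]
  have := lt_specRad G (ww G c p ρ) ρ (ww_pos G c p ρ h1) (fun v => by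
    by_cases hv : v = c
    · subst hv; rw [hsum, hwc]; linarith
    · rw [sum_off hp ρ h1 v hv]) c (by rw [hsum, hwc]; linarith)
  linarith

/-- upper bound for the extremal structure -/
lemma upper {V : Type} [Fintype V] {G : SimpleGraph V} {c : V} {p : V → V}
    (hp : IsPartner G c p) (r t : ℕ) (ρ : ℝ) (h1 : 1 < ρ)
    (h3 : (ρ ^ 2 - r) * (ρ ^ 2 - 1) = t * ρ ^ 2)
    (hT : #(TT G c p) = 0) (hL : #(LL c p) = r) (hY : #(YY G c p) = t) : specRad G ≤ ρ := by
  apply specRad_le G (ww G c p ρ) ρ (by linarith) (ww_pos G c p ρ h1)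
  intro v
  by_cases hv : v = c
  · subst hv
    rw [sum_center hp, hT, hL, hY]
    have e1 : ρ ^ 2 - 1 ≠ 0 := by nlinarith
    have e3 : ρ ≠ 0 := by linarith
    apply le_of_eq
    simp [ww]
    field_simp
    linarith
  · rw [sum_off hp ρ h1 v hv]

lemma S_nl {r t : ℕ} (i : Fin r) : (Sgraph r t).Adj none (some (Sum.inl i)) := by
  simp [Sgraph]
lemma S_n0 {r t : ℕ} (j : Fin t) : (Sgraph r t).Adj none (some (Sum.inr (j, 0))) := by
  simp [Sgraph]
lemma S_n1 {r t : ℕ} (j : Fin t) : ¬ (Sgraph r t).Adj none (some (Sum.inr (j, 1))) := by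
  simp [Sgraph]
lemma S_ll {r t : ℕ} (i i' : Fin r) :
    ¬ (Sgraph r t).Adj (some (Sum.inl i)) (some (Sum.inl i')) := by
  simp [Sgraph]
lemma S_lr {r t : ℕ} (i : Fin r) (x : Fin t × Fin 2) :
    ¬ (Sgraph r t).Adj (some (Sum.inl i)) (some (Sum.inr x)) := by
  simp [Sgraph]
lemma S_rr {r t : ℕ} (j j' : Fin t) (k k' : Fin 2) :
    (Sgraph r t).Adj (some (Sum.inr (j, k))) (some (Sum.inr (j', k'))) ↔ j = j' ∧ k ≠ k' := by
  fin_cases k <;> fin_cases k' <;> simp [Sgraph, eq_comm]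

def pS {r t : ℕ} : Option (Fin r ⊕ Fin t × Fin 2) → Option (Fin r ⊕ Fin t × Fin 2)
  | none => none
  | some (Sum.inl i) => some (Sum.inl i)
  | some (Sum.inr (j, k)) => some (Sum.inr (j, 1 - k))

lemma pS_partner (r t : ℕ) : IsPartner (Sgraph r t) none pS := by
  refine ⟨?_, ?_, ?_, ?_⟩
  · rintro (_ | i | ⟨j, k⟩) h <;> simp_all [pS]
  · rintro (_ | i | ⟨j, k⟩) h <;> simp_all [pS]
  · rintro (_ | i | ⟨j, k⟩) (_ | i' | ⟨j', k'⟩) h h' <;> try contradiction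
    · simp [S_ll, pS]
    · simp [S_lr, pS]
    · rw [SimpleGraph.adj_comm]; simp [S_lr, pS]
    · rw [S_rr]
      fin_cases k <;> fin_cases k' <;> simp [pS, eq_comm]
  · rintro (_ | i | ⟨j, k⟩) h
    · contradiction
    · exact Or.inl (S_nl i)
    · fin_cases k
      · exact Or.inl (S_n0 j)
      · exact Or.inr (S_n0 j)

lemma S_conn (r t : ℕ) : (Sgraph r t).Connected := by
  have h : ∀ v, (Sgraph r t).Reachable none v := by
    rintro (_ | i | ⟨j, k⟩)
    · exact SimpleGraph.Reachable.refl _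
    · exact (S_nl i).reachable
    · fin_cases k
      · exact (S_n0 j).reachable
      · exact (S_n0 j).reachable.trans
          (SimpleGraph.Adj.reachable ((S_rr j j 0 1).mpr ⟨rfl, by simp⟩))
  exact { preconnected := fun u v => (h u).symm.trans (h v), nonempty := ⟨none⟩ }

lemma cond_of_partner {V : Type} {G : SimpleGraph V} {c : V} {p : V → V}
    (hp : IsPartner G c p) : Cond G c := by
  intro v u u' hv hu hu' ha ha'
  rw [((hp.2.2.1 v u hv hu).mp ha).1, ((hp.2.2.1 v u' hv hu').mp ha').1]

lemma S_card (r t : ℕ) : Fintype.card (Option (Fin r ⊕ Fin t × Fin 2)) = 1 + r + 2 * t := by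
  simp; ring

lemma S_upper (r t : ℕ) (ρ : ℝ) (h1 : 1 < ρ)
    (h3 : (ρ ^ 2 - r) * (ρ ^ 2 - 1) = t * ρ ^ 2) : specRad (Sgraph r t) ≤ ρ := by
  have hT : #(TT (Sgraph r t) none pS) = 0 := by
    rw [Finset.card_eq_zero, Finset.eq_empty_iff_forall_notMem]
    intro x hx
    rw [mem_TT] at hx
    revert hx
    rcases x with (_ | i | ⟨j, k⟩) <;> rintro ⟨a, b, d, e⟩
    · exact a rfl
    · exact b rfl
    · fin_cases k
      · exact S_n1 j e
      · exact S_n1 j d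
  have hL : #(LL (none : Option (Fin r ⊕ Fin t × Fin 2)) pS) = r := by
    have : LL (none : Option (Fin r ⊕ Fin t × Fin 2)) pS
        = (univ : Finset (Fin r)).image (fun i => some (Sum.inl i)) := by
      ext x
      rw [mem_LL]
      rcases x with (_ | i | ⟨j, k⟩)
      · simp
      · simp [pS]
      · fin_cases k <;> simp [pS]
    rw [this, Finset.card_image_of_injective]
    · simp
    · intro a b h; simpa using h
  have hct := card_total (pS_partner r t)
  rw [S_card] at hct
  exact upper (pS_partner r t) r t ρ h1 h3 hT hL (by omega)

lemma specRad_iso_le {V W : Type} [Fintype V] [Fintype W] {G : SimpleGraph V} {H : SimpleGraph W}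
    (e : G ≃g H) : specRad G = specRad H := by
  unfold specRad
  congr 1
  ext t
  constructor
  · rintro ⟨v, hv, h⟩
    refine ⟨v ∘ e.symm, ?_, ?_⟩
    · intro h0; apply hv; funext x
      simpa using congrFun h0 (e x)
    · funext x
      have := congrFun h (e.symm x)
      rw [adjMat_mulVec] at this ⊢
      simp only [Pi.smul_apply, Function.comp] at this ⊢
      rw [← this]
      rw [← Equiv.sum_comp e.toEquiv]
      apply Finset.sum_congr rfl
      intro y _
      have hiff : H.Adj x (e y) ↔ G.Adj (e.symm x) y := by
        rw [← e.symm.map_adj_iff]; simp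
      simp [hiff]
  · rintro ⟨v, hv, h⟩
    refine ⟨v ∘ e, ?_, ?_⟩
    · intro h0; apply hv; funext x
      simpa using congrFun h0 (e.symm x)
    · funext x
      have := congrFun h (e x)
      rw [adjMat_mulVec] at this ⊢
      simp only [Pi.smul_apply, Function.comp] at this ⊢
      rw [← this]
      rw [← Equiv.sum_comp e.toEquiv]
      apply Finset.sum_congr rfl
      intro y _
      have hiff : H.Adj (e x) (e y) ↔ G.Adj x y := e.map_adj_iff
      simp [hiff]

lemma build_iso {V : Type} [Fintype V] {G : SimpleGraph V} {c : V} {p : V → V}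
    (hp : IsPartner G c p) (r t : ℕ) (hcard : Fintype.card V = 1 + r + 2 * t)
    (hT : #(TT G c p) = 0) (hL : #(LL c p) = r) : Nonempty (G ≃g Sgraph r t) := by
  have hct := card_total hp
  have hY : #(YY G c p) = t := by omega
  obtain ⟨h1, h2, h3, h4⟩ := hp
  let eL := (Finset.equivFinOfCardEq hL).symm
  let eY := (Finset.equivFinOfCardEq hY).symm
  have hl : ∀ i, (eL i : V) ≠ c ∧ p (eL i) = eL i := fun i => by
    have := (eL i).2
    simpa only [LL, mem_filter, mem_univ, true_and] using this
  have hy : ∀ j, (eY j : V) ≠ c ∧ p (eY j) ≠ eY j ∧ G.Adj c (eY j) ∧ ¬ G.Adj c (p (eY j)) :=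
    fun j => by
      have := (eY j).2
      simpa only [YY, mem_filter, mem_univ, true_and] using this
  have hlc : ∀ i, G.Adj c (eL i) := fun i => by
    have := h4 _ (hl i).1
    rw [(hl i).2] at this
    simpa using this
  have eLi : ∀ i i', (eL i : V) = eL i' → i = i' := fun i i' h => eL.injective (Subtype.ext h)
  have eYi : ∀ i i', (eY i : V) = eY i' → i = i' := fun i i' h => eY.injective (Subtype.ext h)
  let f : Option (Fin r ⊕ Fin t × Fin 2) → V := fun x => match x with
    | none => c
    | some (Sum.inl i) => eL i
    | some (Sum.inr (j, k)) => if k = 0 then (eY j : V) else p (eY j)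
  have fn : f none = c := rfl
  have fl : ∀ i, f (some (Sum.inl i)) = eL i := fun _ => rfl
  have f0 : ∀ j, f (some (Sum.inr (j, 0))) = eY j := fun _ => rfl
  have f1 : ∀ j, f (some (Sum.inr (j, 1))) = p (eY j) := fun _ => rfl
  have fnc : ∀ x, x ≠ none → f x ≠ c := by
    rintro (_ | i | ⟨j, k⟩) hx
    · contradiction
    · exact (hl i).1
    · fin_cases k
      · exact (hy j).1
      · exact h1 _ (hy j).1
  have fp : ∀ x, x ≠ none → f (pS x) = p (f x) := by
    rintro (_ | i | ⟨j, k⟩) hx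
    · contradiction
    · exact (hl i).2.symm
    · fin_cases k
      · rfl
      · exact (h2 _ (hy j).1).symm
  have fN : ∀ x, G.Adj c (f x) ↔ (Sgraph r t).Adj none x := by
    rintro (_ | i | ⟨j, k⟩)
    · simp [fn]
    · simp [fl, S_nl, hlc]
    · fin_cases k
      · exact iff_of_true (hy j).2.2.1 (S_n0 j)
      · exact iff_of_false (hy j).2.2.2 (S_n1 j)
  have finj : Function.Injective f := by
    have hly : ∀ i j, (eL i : V) ≠ eY j := fun i j h => by
      have := (hl i).2; rw [h] at this; exact (hy j).2.1 this
    have hlp : ∀ i j, (eL i : V) ≠ p (eY j) := fun i j h => by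
      have := (hl i).2; rw [h, h2 _ (hy j).1] at this; exact (hy j).2.1 this.symm
    have hyp : ∀ j j', (eY j : V) ≠ p (eY j') := fun j j' h => by
      have := (hy j).2.2.1; rw [h] at this; exact (hy j').2.2.2 this
    have hpp : ∀ j j', p (eY j : V) = p (eY j') → j = j' := fun j j' h => by
      have := congrArg p h
      rw [h2 _ (hy j).1, h2 _ (hy j').1] at this
      exact eYi _ _ this
    rintro (_ | i | ⟨j, k⟩) (_ | i' | ⟨j', k'⟩) h
    · rfl
    · exact absurd (h.symm.trans fn) (fnc (some (Sum.inl i')) (Option.some_ne_none _))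
    · exact absurd (h.symm.trans fn) (fnc (some (Sum.inr (j', k'))) (Option.some_ne_none _))
    · exact absurd (h.trans fn) (fnc (some (Sum.inl i)) (Option.some_ne_none _))
    · rw [eLi i i' h]
    · fin_cases k'
      · exact absurd h (hly _ _)
      · exact absurd h (hlp _ _)
    · exact absurd (h.trans fn) (fnc (some (Sum.inr (j, k))) (Option.some_ne_none _))
    · fin_cases k
      · exact absurd h.symm (hly _ _)
      · exact absurd h.symm (hlp _ _)
    · fin_cases k <;> fin_cases k'
      · rw [eYi j j' h]
      · exact absurd h (hyp _ _)
      · exact absurd h.symm (hyp _ _)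
      · rw [hpp j j' h]
  have fbij : Function.Bijective f := by
    rw [Fintype.bijective_iff_injective_and_card]
    exact ⟨finj, by rw [hcard, S_card]⟩
  refine ⟨SimpleGraph.Iso.symm ⟨Equiv.ofBijective f fbij, ?_⟩⟩
  intro a b
  show G.Adj (f a) (f b) ↔ _
  by_cases ha : a = none
  · subst ha; exact fN b
  by_cases hb : b = none
  · subst hb; rw [G.adj_comm, (Sgraph r t).adj_comm a none]; exact fN a
  rw [h3 _ _ (fnc a ha) (fnc b hb), (pS_partner r t).2.2.1 a b ha hb, ← fp a ha]
  rw [finj.eq_iff, finj.ne_iff]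

lemma final {V : Type} [Fintype V] (G : SimpleGraph V) (n r t : ℕ) (hr : r ≤ 1) (ht : 1 ≤ t)
    (hn : n = 1 + r + 2 * t)
    (hcard : Fintype.card V = n) (hconn : G.Connected) (hdiss : dissNum G = n - 1)
    (hmin : ∀ H : SimpleGraph (Fin n), H.Connected → dissNum H = n - 1 →
      specRad G ≤ specRad H) : Nonempty (G ≃g Sgraph r t) := by
  obtain ⟨ρ, g1, g2, g3⟩ := exists_rho r t hr ht
  have hle : specRad G ≤ ρ := by
    let e : Option (Fin r ⊕ Fin t × Fin 2) ≃ Fin n :=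
      Fintype.equivFinOfCardEq (by rw [S_card, hn])
    let H : SimpleGraph (Fin n) := (Sgraph r t).map e.toEmbedding
    let φ : Sgraph r t ≃g H := SimpleGraph.Iso.map e (Sgraph r t)
    have hHc : H.Connected := φ.connected_iff.mp (S_conn r t)
    have hHd : dissNum H = n - 1 := by
      have hC : Cond H (φ none) := by
        intro v u u' hv hu hu' ha ha'
        have key : ∀ x, x ≠ φ none → φ.symm x ≠ none := by
          intro x hx h; apply hx; rw [← h]; simp
        have := cond_of_partner (pS_partner r t) (φ.symm v) (φ.symm u) (φ.symm u')
          (key v hv) (key u hu) (key u' hu') (φ.symm.map_adj_iff.mpr ha) (φ.symm.map_adj_iff.mpr ha')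
        exact φ.symm.injective this
      have j : Fin t := ⟨0, ht⟩
      have := diss_of_cond H (φ none) hC (φ (some (Sum.inr (j, 0)))) (φ none)
        (φ (some (Sum.inr (j, 1)))) (by simp) (φ.map_adj_iff.mpr (S_n0 j).symm)
        (φ.map_adj_iff.mpr ((S_rr j j 0 1).mpr ⟨rfl, by simp⟩))
      rw [this, Fintype.card_fin]
    calc specRad G ≤ specRad H := hmin H hHc hHd
      _ = specRad (Sgraph r t) := (specRad_iso_le φ).symm
      _ ≤ ρ := S_upper r t ρ g1 g3
  obtain ⟨c, hc⟩ := cond_of_diss G (by omega) (by rw [hdiss, hcard])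
  obtain ⟨p, hp⟩ := exists_partner G c hc hconn
  obtain ⟨k1, k2⟩ := key hp r t hr ht ρ g1 g2 g3 (by omega) hle
  by_cases hL : #(LL c p) = r
  · exact build_iso hp r t (by omega) k1 hL
  · obtain ⟨rfl, rfl⟩ := k2.resolve_left hL
    -- the path on three vertices, seen from its middle vertex
    have hct := card_total hp
    obtain ⟨a, ha⟩ : (LL c p).Nonempty := by
      rw [← Finset.card_pos]; omega
    have hLL : #(LL c p) = 2 := by omega
    have hac : a ≠ c ∧ p a = a := by
      simpa only [LL, mem_filter, mem_univ, true_and] using ha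
    have h3 : ∀ x : V, x ≠ c → p x = x := by
      intro x hx
      by_contra hpx
      have hsub : insert c (insert x (LL c p)) ⊆ univ := Finset.subset_univ _
      have hcd := Finset.card_le_card hsub
      have hx' : x ∉ LL c p := by simp [LL, hpx]
      have hc' : c ∉ insert x (LL c p) := by simp [LL, Ne.symm hx]
      rw [Finset.card_insert_of_notMem hc', Finset.card_insert_of_notMem hx', Finset.card_univ] at hcd
      omega
    have hAc : ∀ x, x ≠ c → G.Adj c x := fun x hx => by
      have := hp.2.2.2 x hx
      rw [h3 x hx] at this; simpa using this
    have hnA : ∀ x y, x ≠ c → y ≠ c → ¬ G.Adj x y := fun x y hx hy h => by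
      have := (hp.2.2.1 x y hx hy).mp h
      rw [h3 x hx] at this; exact this.2 this.1
    have hca : Cond G a := by
      intro v u u' hv hu hu' h h'
      by_cases hvc : v = c
      · subst hvc
        by_contra hne
        have hsub : ({v, a, u, u'} : Finset V) ⊆ univ := Finset.subset_univ _
        have hcd := Finset.card_le_card hsub
        rw [Finset.card_univ] at hcd
        have h4 : #({v, a, u, u'} : Finset V) = 4 := by
          rw [Finset.card_insert_of_notMem, Finset.card_insert_of_notMem,
            Finset.card_insert_of_notMem, Finset.card_singleton]
          · simpa using hne
          · simp [hu.symm, hu'.symm]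
          · simp [hv, h.ne, h'.ne]
        omega
      · have e1 : u = c := by by_contra h0; exact hnA v u hvc h0 h
        have e2 : u' = c := by by_contra h0; exact hnA v u' hvc h0 h'
        rw [e1, e2]
    obtain ⟨q, hq⟩ := exists_partner G a hca hconn
    obtain ⟨m1, m2⟩ := key hq 0 1 hr ht ρ g1 g2 g3 (by omega) hle
    refine build_iso hq 0 1 (by omega) m1 ?_
    have hct' := card_total hq
    obtain ⟨b, hb, hba⟩ : ∃ b ∈ LL c p, b ≠ a :=
      Finset.exists_mem_ne (by omega) a
    have hbc : b ≠ c ∧ p b = b := by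
      simpa only [LL, mem_filter, mem_univ, true_and] using hb
    have hqc := (hq.2.2.1 c b hac.1.symm hba).mp (hAc b hbc.1)
    have hcn : c ∉ LL a q := by
      simp only [LL, mem_filter, mem_univ, true_and, not_and]
      intro _ h
      rw [h] at hqc
      exact hqc.2 hqc.1
    have han : a ∉ insert c (LL a q) := by simp [LL, hac.1]
    have hcd := Finset.card_le_card (Finset.subset_univ (insert a (insert c (LL a q))))
    rw [Finset.card_insert_of_notMem han, Finset.card_insert_of_notMem hcn, Finset.card_univ] at hcd
    omega

end helpers

/-- If a connected graph `G` of order `n ≥ 3` with dissociation number `n-1` attains the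
minimum spectral radius among all connected graphs of order `n` with dissociation number
`n-1`, then `G ≅ S(0,(n-1)/2)` when `n` is odd and `G ≅ S(1,(n-2)/2)` when `n` is even. -/
theorem minimum_spectral_radius_diss_eq_card_sub_one
    {n : ℕ} (hn : 3 ≤ n) {V : Type} [Fintype V] (G : SimpleGraph V)
    (hcard : Fintype.card V = n) (hconn : G.Connected) (hdiss : dissNum G = n - 1)
    (hmin : ∀ H : SimpleGraph (Fin n), H.Connected → dissNum H = n - 1 →
      specRad G ≤ specRad H) :
    (Odd n → Nonempty (G ≃g Sgraph 0 ((n - 1) / 2))) ∧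
    (Even n → Nonempty (G ≃g Sgraph 1 ((n - 2) / 2))) := by
  constructor
  · rintro ⟨k, hk⟩
    exact final G n 0 ((n - 1) / 2) (by omega) (by omega) (by omega) hcard hconn hdiss hmin
  · rintro ⟨k, hk⟩
    exact final G n 1 ((n - 2) / 2) (by omega) (by omega) (by omega) hcard hconn hdiss hmin
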